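/- Let r > 0 and let n be an integer satisfying condition (⋆). Let u, v ∈ X_r, let w_u, w_v ∈ X_r satisfy √n·w_u − (1/p⁰)Q(w_u,w_u) = u and √n·w_v − (1/p⁰)Q(w_v,w_v) = v, and set Q_n(u,u) = n√n·w_u − n·u and Q_n(v,v) = n√n·w_v − n·v. Then ‖Q_n(u,u) − Q_n(v,v)‖ ≤ 8Cr·‖u − v‖. -/

import Mathlib

/-!
By the equation for `w_u`, the function `Q_n(u, u) = n√n w_u - n u` equals `n (1/p⁰) Q(w_u, w_u)`, and
likewise for `v`. The proof rests on the estimates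
`‖(1/p⁰) Q⁺(f, f)‖ ≤ C ‖f‖²` and `‖(1/p⁰) (Q(f, f) - Q(g, g))‖ ≤ 2C (‖f‖ + ‖g‖) ‖f - g‖`
(`lintegral_Qplus_le`, `lintegral_Qcoll_sub_le`).

*Numerical part.* Since `w_u ≥ 0` and the loss term is nonnegative, `√n ‖w_u‖ ≤ r + C ‖w_u‖²`. The smallness
of `C r (1 + C r) / √n` then gives `C ‖w_u‖ ≤ 1/6` and `√n ‖w_u‖ ≤ (12/11) r`
(`norm_le_of_quadratic`); the same holds for `w_v`. Subtracting the two equations yields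
`√n ‖w_u - w_v‖ ≤ (3/2) ‖u - v‖`. Hence the difference of the `Q_n` is at most
`n · 2C · (24/11)(r/√n) · (3/2)(1/√n) ‖u - v‖ = (72/11) C r ‖u - v‖`.

*Collision estimates.* The bound on the gain term follows from the invariance of the measure
`dp dq / (p⁰ q⁰)` under `(p, q) ↦ (p′, q′)` for fixed `ω` (`lintegral_collision`). No Jacobian determinant
is computed. The map moves `p` and `q` along lines in the direction `ω̂`, and by Tonelli
(`lintegral_fiber₂`) it suffices to consider one pair of lines. There it is the elastic collision of
two relativistic particles on a line, whose masses `A`, `B` are the energies of the components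
orthogonal to `ω̂`. In rapidities, `s = A sinh x` and `t = B sinh y`, the measure becomes `dx dy`, and the
collision reflects both rapidities in that of the centre of mass (`lineC_rapidity`). In the coordinates
`y` and `z = x - y` this is `(y, z) ↦ (y + ψ z, -z)`, which preserves Lebesgue measure
(`lintegral_shear`).
-/

open MeasureTheory Real

noncomputable section

/-- Momentum space `ℝ³`. -/
abbrev E3 : Type := EuclideanSpace ℝ (Fin 3)

/-- The scalar product associated with the Bianchi type I metric coefficients `α = a(t)`,
`β = b(t)`: `p̄·q̄ = α²p¹q¹ + β²(p²q² + p³q³)`. -/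
def mdot (α β : ℝ) (p q : E3) : ℝ :=
  α ^ 2 * p 0 * q 0 + β ^ 2 * (p 1 * q 1 + p 2 * q 2)

/-- `p⁰ = √(1 + |p̄|²)` where `|p̄|² = p̄·p̄`. -/
def pZ (α β : ℝ) (p : E3) : ℝ := Real.sqrt (1 + mdot α β p p)

/-- `ω` normalized to unit length for the metric norm. -/
def omHat (α β : ℝ) (ω : E3) : E3 := (Real.sqrt (mdot α β ω ω))⁻¹ • ω

/-- The total energy `e = p⁰ + q⁰`. -/
def collE (α β : ℝ) (p q : E3) : ℝ := pZ α β p + pZ α β q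

/-- The function `C(p̄, q̄, ω)` of Glassey's representation of post-collisional momenta. -/
def collC (α β : ℝ) (p q ω : E3) : ℝ :=
  2 * pZ α β p * pZ α β q * collE α β p q *
      mdot α β (omHat α β ω) ((pZ α β q)⁻¹ • q - (pZ α β p)⁻¹ • p) /
    (collE α β p q ^ 2 - mdot α β (omHat α β ω) (p + q) ^ 2)

/-- The post-collisional momentum `p̄′ = p̄ + C(p̄,q̄,ω)ω̂`. -/
def pPr (α β : ℝ) (p q ω : E3) : E3 := p + collC α β p q ω • omHat α β ω

/-- The post-collisional momentum `q̄′ = q̄ − C(p̄,q̄,ω)ω̂`. -/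
def qPr (α β : ℝ) (p q ω : E3) : E3 := q - collC α β p q ω • omHat α β ω

/-- The surface measure on the unit sphere `S² ⊂ ℝ³`. -/
def sphMeas : Measure (Metric.sphere (0 : E3) 1) := (volume : Measure E3).toSphere

/-- The gain term `Q⁺(f,g)`. -/
def Qplus (α β : ℝ) (S₀ : E3 → E3 → E3 → E3 → ℝ) (f g : E3 → ℝ) (p : E3) : ℝ :=
  α * β ^ 2 *
    ∫ q : E3, (pZ α β q)⁻¹ *
      ∫ ω : Metric.sphere (0 : E3) 1,
        f (pPr α β p q ω) * g (qPr α β p q ω) *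
          S₀ p q (pPr α β p q ω) (qPr α β p q ω) ∂sphMeas

/-- The loss term `Q⁻(f,g)`. -/
def Qminus (α β : ℝ) (S₀ : E3 → E3 → E3 → E3 → ℝ) (f g : E3 → ℝ) (p : E3) : ℝ :=
  α * β ^ 2 *
    ∫ q : E3, (pZ α β q)⁻¹ *
      ∫ ω : Metric.sphere (0 : E3) 1,
        f p * g q * S₀ p q (pPr α β p q ω) (qPr α β p q ω) ∂sphMeas

/-- The collision operator `Q = Q⁺ − Q⁻`. -/
def Qcoll (α β : ℝ) (S₀ : E3 → E3 → E3 → E3 → ℝ) (f g : E3 → ℝ) (p : E3) : ℝ :=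
  Qplus α β S₀ f g p - Qminus α β S₀ f g p

/-- The space `L¹(ℝ³)`. -/
abbrev L1 : Type := Lp ℝ 1 (volume : Measure E3)

/-- Membership in `X_r = {f ∈ L¹(ℝ³) : f ≥ 0 a.e., ‖f‖ ≤ r}`. -/
def memX (r : ℝ) (f : L1) : Prop := (0 ≤ᵐ[volume] ⇑f) ∧ ‖f‖ ≤ r

end

/-! ### Collisions on a line -/

lemma sqrt_sq_add_sinh {A : ℝ} (hA : 0 < A) (x : ℝ) :
    √(A ^ 2 + (A * Real.sinh x) ^ 2) = A * Real.cosh x := by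
  rw [show A ^ 2 + (A * Real.sinh x) ^ 2 = (A * Real.cosh x) ^ 2 by
    rw [mul_pow, mul_pow, Real.cosh_sq]; ring, Real.sqrt_sq (mul_pos hA (Real.cosh_pos x)).le]

/-- In the rapidity variable `x`, where `s = A sinh x`, the measure `ds / √(A² + s²)` is `dx`. -/
lemma lintegral_rapidity {A : ℝ} (hA : 0 < A) (F : ℝ → ENNReal) :
    ∫⁻ s, F s * ENNReal.ofReal (√(A ^ 2 + s ^ 2))⁻¹ = ∫⁻ x, F (A * Real.sinh x) := by
  have himg : (fun x => A * Real.sinh x) '' Set.univ = Set.univ := by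
    rw [Set.image_univ, Set.range_eq_univ]
    intro y
    obtain ⟨x, hx⟩ := Real.sinh_surjective (y / A)
    exact ⟨x, by simp only [hx]; field_simp⟩
  have hinj : Set.InjOn (fun x => A * Real.sinh x) Set.univ := fun x _ y _ h =>
    Real.sinh_injective (mul_left_cancel₀ hA.ne' h)
  have h := lintegral_image_eq_lintegral_abs_deriv_mul (s := Set.univ) MeasurableSet.univ
    (fun x _ => ((Real.hasDerivAt_sinh x).const_mul A).hasDerivWithinAt) hinj
    (fun s => F s * ENNReal.ofReal (√(A ^ 2 + s ^ 2))⁻¹)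
  rw [himg, Measure.restrict_univ] at h
  rw [h]
  refine lintegral_congr fun x => ?_
  have hc : 0 < A * Real.cosh x := mul_pos hA (Real.cosh_pos x)
  rw [sqrt_sq_add_sinh hA, abs_of_pos hc, mul_left_comm, ← ENNReal.ofReal_mul hc.le, mul_inv_cancel₀ hc.ne']
  simp

/-- In the coordinates `y` and `z = x - y` the map `(x, y) ↦ (2y + ψ(x-y) - x, y + ψ(x-y))` reads
`(y, z) ↦ (y + ψ z, -z)`, a shear followed by a reflection, so it preserves Lebesgue measure. -/
lemma lintegral_shear {H : ℝ → ℝ → ENNReal} (hH : Measurable (Function.uncurry H))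
    {ψ : ℝ → ℝ} (hψ : Measurable ψ) :
    ∫⁻ x, ∫⁻ y, H (2 * y + ψ (x - y) - x) (y + ψ (x - y)) = ∫⁻ x, ∫⁻ y, H x y := by
  have hH' : ∀ {γ : Type} [MeasurableSpace γ] (a b : γ → ℝ), Measurable a → Measurable b →
      Measurable fun c => H (a c) (b c) := fun a b ha hb => hH.comp (ha.prodMk hb)
  calc ∫⁻ x, ∫⁻ y, H (2 * y + ψ (x - y) - x) (y + ψ (x - y))
      = ∫⁻ y, ∫⁻ x, H (2 * y + ψ (x - y) - x) (y + ψ (x - y)) :=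
        lintegral_lintegral_swap (by
          unfold Function.uncurry
          exact (hH' _ _ (by fun_prop) (by fun_prop)).aemeasurable)
    _ = ∫⁻ y, ∫⁻ z, H (y + ψ z - z) (y + ψ z) := by
        refine lintegral_congr fun y => ?_
        rw [← lintegral_add_right_eq_self _ y]
        refine lintegral_congr fun z => ?_
        rw [add_sub_cancel_right]
        congr 1
        ring
    _ = ∫⁻ z, ∫⁻ y, H (y + ψ z - z) (y + ψ z) :=
        lintegral_lintegral_swap (by
          unfold Function.uncurry
          exact (hH' _ _ (by fun_prop) (by fun_prop)).aemeasurable)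
    _ = ∫⁻ z, ∫⁻ y, H (y - z) y := by
        refine lintegral_congr fun z => ?_
        exact lintegral_add_right_eq_self (fun y => H (y - z) y) (ψ z)
    _ = ∫⁻ y, ∫⁻ z, H (y - z) y :=
        lintegral_lintegral_swap (by
          unfold Function.uncurry
          exact (hH' _ _ (by fun_prop) (by fun_prop)).aemeasurable)
    _ = ∫⁻ y, ∫⁻ x, H x y :=
        lintegral_congr fun y => lintegral_sub_left_eq_self (fun x => H x y) y
    _ = ∫⁻ x, ∫⁻ y, H x y :=
        lintegral_lintegral_swap (by
          unfold Function.uncurry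
          exact (hH' _ _ (by fun_prop) (by fun_prop)).aemeasurable)

/-- Momentum transferred in the elastic collision of two relativistic particles on a line, with
energies `a`, `b` and momenta `s`, `t`. -/
noncomputable def lineC (a b s t : ℝ) : ℝ :=
  2 * a * b * (a + b) * (b⁻¹ * t - a⁻¹ * s) / ((a + b) ^ 2 - (s + t) ^ 2)

/-- The change of rapidity of the second of two colliding particles of masses `A` and `B` on a line
when the relative rapidity is `z`. -/
noncomputable def shift (A B z : ℝ) : ℝ :=
  Real.log ((A * Real.exp z + B) / (A * Real.exp (-z) + B))

lemma measurable_shift (A B : ℝ) : Measurable (shift A B) := by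
  unfold shift; fun_prop

/-- An elastic collision on a line reflects both rapidities in the rapidity `η` of the centre of
mass, given by `exp (2η) = (A exp x + B exp y) / (A exp (-x) + B exp (-y))`; thus
`2η = 2y + shift A B (x - y)`. -/
lemma lineC_rapidity {A B : ℝ} (hA : 0 < A) (hB : 0 < B) (x y : ℝ) :
    A * Real.sinh x +
        lineC (A * Real.cosh x) (B * Real.cosh y) (A * Real.sinh x) (B * Real.sinh y) =
      A * Real.sinh (2 * y + shift A B (x - y) - x) ∧
    B * Real.sinh y -
        lineC (A * Real.cosh x) (B * Real.cosh y) (A * Real.sinh x) (B * Real.sinh y) =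
      B * Real.sinh (y + shift A B (x - y)) := by
  have hX := Real.exp_pos x
  have hY := Real.exp_pos y
  have hp : 0 < (A * Real.exp (x - y) + B) / (A * Real.exp (-(x - y)) + B) := by positivity
  have hcx := (Real.cosh_pos x).ne'
  have hcy := (Real.cosh_pos y).ne'
  have hnum : 2 * (A * Real.cosh x) * (B * Real.cosh y) * (A * Real.cosh x + B * Real.cosh y) *
      ((B * Real.cosh y)⁻¹ * (B * Real.sinh y) - (A * Real.cosh x)⁻¹ * (A * Real.sinh x)) =
      2 * (A * B) * (A * Real.cosh x + B * Real.cosh y) *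
        (Real.sinh y * Real.cosh x - Real.sinh x * Real.cosh y) := by
    field_simp
  have hden : (A * Real.cosh x + B * Real.cosh y) ^ 2 - (A * Real.sinh x + B * Real.sinh y) ^ 2 =
      (A * Real.exp x + B * Real.exp y) * (A * Real.exp (-x) + B * Real.exp (-y)) := by
    simp only [Real.cosh_eq, Real.sinh_eq]
    ring
  have e1 : Real.exp (2 * y + shift A B (x - y) - x) =
      Real.exp y * Real.exp y * ((A * Real.exp (x - y) + B) / (A * Real.exp (-(x - y)) + B)) *
        (Real.exp x)⁻¹ := by
    rw [Real.exp_sub, Real.exp_add, shift, Real.exp_log hp, two_mul, Real.exp_add, div_eq_mul_inv]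
  have e2 : Real.exp (y + shift A B (x - y)) =
      Real.exp y * ((A * Real.exp (x - y) + B) / (A * Real.exp (-(x - y)) + B)) := by
    rw [Real.exp_add, shift, Real.exp_log hp]
  rw [lineC, hnum, hden, Real.sinh_eq (2 * y + _ - x), Real.sinh_eq (y + _),
    Real.exp_neg (2 * y + _ - x), Real.exp_neg (y + _), e1, e2, neg_sub]
  simp only [Real.cosh_eq, Real.sinh_eq, Real.exp_neg, Real.exp_sub]
  generalize Real.exp x = X at *
  generalize Real.exp y = Y at *
  constructor
  · field_simp
    ring
  · field_simp
    ring

/-- The collision map on a line preserves `ds dt / (√(A² + s²) √(B² + t²))`. -/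
lemma lintegral_line {A B : ℝ} (hA : 0 < A) (hB : 0 < B) {G : ℝ → ℝ → ENNReal}
    (hG : Measurable (Function.uncurry G)) :
    ∫⁻ s, ∫⁻ t, G (s + lineC (√(A ^ 2 + s ^ 2)) (√(B ^ 2 + t ^ 2)) s t)
          (t - lineC (√(A ^ 2 + s ^ 2)) (√(B ^ 2 + t ^ 2)) s t) *
        ENNReal.ofReal (√(B ^ 2 + t ^ 2))⁻¹ * ENNReal.ofReal (√(A ^ 2 + s ^ 2))⁻¹ =
      ∫⁻ s, ∫⁻ t, G s t *
        ENNReal.ofReal (√(B ^ 2 + t ^ 2))⁻¹ * ENNReal.ofReal (√(A ^ 2 + s ^ 2))⁻¹ := by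
  have key : ∀ K : ℝ → ℝ → ENNReal,
      ∫⁻ s, ∫⁻ t, K s t *
        ENNReal.ofReal (√(B ^ 2 + t ^ 2))⁻¹ * ENNReal.ofReal (√(A ^ 2 + s ^ 2))⁻¹ =
      ∫⁻ x, ∫⁻ y, K (A * Real.sinh x) (B * Real.sinh y) := by
    intro K
    rw [← lintegral_rapidity hA (fun s => ∫⁻ y, K s (B * Real.sinh y))]
    refine lintegral_congr fun s => ?_
    rw [lintegral_mul_const' _ _ ENNReal.ofReal_ne_top, lintegral_rapidity hB (K s)]
  rw [key G, key fun s t => G (s + lineC (√(A ^ 2 + s ^ 2)) (√(B ^ 2 + t ^ 2)) s t)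
          (t - lineC (√(A ^ 2 + s ^ 2)) (√(B ^ 2 + t ^ 2)) s t)]
  simp only [sqrt_sq_add_sinh hA, sqrt_sq_add_sinh hB, (lineC_rapidity hA hB _ _).1, (lineC_rapidity hA hB _ _).2]
  refine lintegral_shear (H := fun x y => G (A * Real.sinh x) (B * Real.sinh y)) ?_
    (measurable_shift A B)
  exact hG.comp (f := fun z : ℝ × ℝ => (A * Real.sinh z.1, B * Real.sinh z.2))
    (by fun_prop)

/-! ### The metric scalar product and measurability -/

lemma mdot_comm (α β : ℝ) (p q : E3) : mdot α β p q = mdot α β q p := by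
  simp only [mdot]; ring

lemma mdot_add_right (α β : ℝ) (p q x : E3) :
    mdot α β p (q + x) = mdot α β p q + mdot α β p x := by
  simp only [mdot, PiLp.add_apply]; ring

lemma mdot_sub_right (α β : ℝ) (p q x : E3) :
    mdot α β p (q - x) = mdot α β p q - mdot α β p x := by
  simp only [mdot, PiLp.sub_apply]; ring

lemma mdot_smul_right (α β c : ℝ) (p q : E3) :
    mdot α β p (c • q) = c * mdot α β p q := by
  simp only [mdot, PiLp.smul_apply, smul_eq_mul]; ring

lemma mdot_add_left (α β : ℝ) (p q x : E3) :
    mdot α β (q + x) p = mdot α β q p + mdot α β x p := by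
  simp only [mdot, PiLp.add_apply]; ring

lemma mdot_smul_left (α β c : ℝ) (p q : E3) :
    mdot α β (c • p) q = c * mdot α β p q := by
  simp only [mdot, PiLp.smul_apply, smul_eq_mul]; ring

lemma mdot_self_nonneg (α β : ℝ) (p : E3) : 0 ≤ mdot α β p p := by
  have : mdot α β p p = (α * p 0) ^ 2 + ((β * p 1) ^ 2 + (β * p 2) ^ 2) := by
    simp only [mdot]; ring
  rw [this]; positivity

@[fun_prop]
lemma measurable_mdot {γ : Type*} [MeasurableSpace γ] (α β : ℝ) {f g : γ → E3}
    (hf : Measurable f) (hg : Measurable g) : Measurable fun x => mdot α β (f x) (g x) := by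
  unfold mdot; fun_prop

@[fun_prop]
lemma measurable_pZ {γ : Type*} [MeasurableSpace γ] (α β : ℝ) {f : γ → E3}
    (hf : Measurable f) : Measurable fun x => pZ α β (f x) := by
  unfold pZ; fun_prop

@[fun_prop]
lemma measurable_omHat {γ : Type*} [MeasurableSpace γ] (α β : ℝ) {f : γ → E3}
    (hf : Measurable f) : Measurable fun x => omHat α β (f x) := by
  unfold omHat; fun_prop

@[fun_prop]
lemma measurable_collC {γ : Type*} [MeasurableSpace γ] (α β : ℝ) {f g h : γ → E3}
    (hf : Measurable f) (hg : Measurable g) (hh : Measurable h) :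
    Measurable fun x => collC α β (f x) (g x) (h x) := by
  unfold collC collE; fun_prop

@[fun_prop]
lemma measurable_pPr {γ : Type*} [MeasurableSpace γ] (α β : ℝ) {f g h : γ → E3}
    (hf : Measurable f) (hg : Measurable g) (hh : Measurable h) :
    Measurable fun x => pPr α β (f x) (g x) (h x) := by
  unfold pPr; fun_prop

@[fun_prop]
lemma measurable_qPr {γ : Type*} [MeasurableSpace γ] (α β : ℝ) {f g h : γ → E3}
    (hf : Measurable f) (hg : Measurable g) (hh : Measurable h) :
    Measurable fun x => qPr α β (f x) (g x) (h x) := by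
  unfold qPr; fun_prop

lemma one_le_pZ (α β : ℝ) (p : E3) : 1 ≤ pZ α β p := by
  rw [pZ, Real.one_le_sqrt]
  linarith [mdot_self_nonneg α β p]

lemma mdot_omHat_self {α β : ℝ} (hα : 0 < α) (hβ : 0 < β) {ω : E3} (hω : ω ≠ 0) :
    mdot α β (omHat α β ω) (omHat α β ω) = 1 := by
  have hne : mdot α β ω ω ≠ 0 := by
    intro h
    apply hω
    have h' : (α * ω 0) ^ 2 + ((β * ω 1) ^ 2 + (β * ω 2) ^ 2) = 0 := by
      rw [← h]; simp only [mdot]; ring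
    have s0 := sq_nonneg (α * ω 0)
    have s1 := sq_nonneg (β * ω 1)
    have s2 := sq_nonneg (β * ω 2)
    have h0 : (α * ω 0) ^ 2 = 0 := by linarith
    have h1 : (β * ω 1) ^ 2 = 0 := by linarith
    have h2 : (β * ω 2) ^ 2 = 0 := by linarith
    ext i
    fin_cases i
    · simpa [hα.ne'] using h0
    · simpa [hβ.ne'] using h1
    · simpa [hβ.ne'] using h2
  have hpos : 0 < mdot α β ω ω := lt_of_le_of_ne (mdot_self_nonneg α β ω) hne.symm
  rw [omHat, mdot_smul_left, mdot_smul_right, ← mul_assoc, ← mul_inv,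
    Real.mul_self_sqrt hpos.le, inv_mul_cancel₀ hne]

/-! ### Invariance of `dp dq / (p⁰ q⁰)` under collisions with fixed `ω` -/

/-- Indicator function of the slab `0 ≤ v·p ≤ 1`. Every line in the direction of a unit vector `v`
meets it in a segment of length one. -/
noncomputable def slab (α β : ℝ) (v p : E3) : ENNReal :=
  Set.indicator (Set.Icc (0 : ℝ) 1) 1 (mdot α β v p)

@[fun_prop]
lemma measurable_slab {γ : Type*} [MeasurableSpace γ] (α β : ℝ) (v : E3) {f : γ → E3}
    (hf : Measurable f) : Measurable fun x => slab α β v (f x) := by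
  unfold slab
  exact (measurable_one.indicator measurableSet_Icc).comp (measurable_mdot α β measurable_const hf)

lemma slab_ne_top (α β : ℝ) (v p : E3) : slab α β v p ≠ ⊤ := by
  unfold slab
  by_cases h : mdot α β v p ∈ Set.Icc (0 : ℝ) 1 <;> simp [h]

/-- Integration over momentum space as an average of integrals over lines in the direction `v`. -/
lemma lintegral_fiber {α β : ℝ} {v : E3} (hv : mdot α β v v = 1) {G : E3 → ENNReal}
    (hG : Measurable G) :
    ∫⁻ p, G p = ∫⁻ p, slab α β v p * ∫⁻ τ : ℝ, G (p + τ • v) := by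
  symm
  calc ∫⁻ p, slab α β v p * ∫⁻ τ : ℝ, G (p + τ • v)
      = ∫⁻ p, ∫⁻ τ : ℝ, slab α β v p * G (p + τ • v) :=
        lintegral_congr fun p => (lintegral_const_mul' _ _ (slab_ne_top α β v p)).symm
    _ = ∫⁻ τ : ℝ, ∫⁻ p, slab α β v p * G (p + τ • v) :=
        lintegral_lintegral_swap (by unfold Function.uncurry; fun_prop)
    _ = ∫⁻ τ : ℝ, ∫⁻ p, slab α β v (p - τ • v) * G p := by
        refine lintegral_congr fun τ => ?_
        rw [← lintegral_add_right_eq_self (fun p => slab α β v (p - τ • v) * G p) (τ • v)]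
        simp
    _ = ∫⁻ p, ∫⁻ τ : ℝ, slab α β v (p - τ • v) * G p :=
        lintegral_lintegral_swap (by unfold Function.uncurry; fun_prop)
    _ = ∫⁻ p, G p := by
        refine lintegral_congr fun p => ?_
        rw [lintegral_mul_const _ (by fun_prop)]
        have h1 : ∫⁻ τ : ℝ, slab α β v (p - τ • v) = 1 := by
          simp only [slab, mdot_sub_right, mdot_smul_right, hv, mul_one]
          rw [lintegral_sub_left_eq_self (fun x : ℝ => Set.indicator (Set.Icc (0 : ℝ) 1) 1 x)]
          rw [lintegral_indicator_one measurableSet_Icc]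
          simp
        rw [h1, one_mul]

lemma lintegral_fiber₂ {α β : ℝ} {v : E3} (hv : mdot α β v v = 1) {K : E3 → E3 → ENNReal}
    (hK : Measurable (Function.uncurry K)) :
    ∫⁻ p, ∫⁻ q, K p q = ∫⁻ p, slab α β v p * ∫⁻ q, slab α β v q *
      ∫⁻ s : ℝ, ∫⁻ t : ℝ, K (p + s • v) (q + t • v) := by
  have hK' : ∀ {γ : Type} [MeasurableSpace γ] (a b : γ → E3), Measurable a → Measurable b →
      Measurable fun c => K (a c) (b c) := fun a b ha hb => hK.comp (ha.prodMk hb)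
  rw [lintegral_fiber hv (G := fun p => ∫⁻ q, K p q) hK.lintegral_prod_right]
  refine lintegral_congr fun p => ?_
  congr 1
  calc ∫⁻ s : ℝ, ∫⁻ q, K (p + s • v) q
      = ∫⁻ s : ℝ, ∫⁻ q, slab α β v q * ∫⁻ t : ℝ, K (p + s • v) (q + t • v) := by
        refine lintegral_congr fun s => ?_
        exact lintegral_fiber hv (hK' _ _ (by fun_prop) (by fun_prop))
    _ = ∫⁻ q, ∫⁻ s : ℝ, slab α β v q * ∫⁻ t : ℝ, K (p + s • v) (q + t • v) := by
        refine lintegral_lintegral_swap (Measurable.aemeasurable ?_)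
        unfold Function.uncurry
        refine Measurable.mul (by fun_prop) (Measurable.lintegral_prod_right' (f := fun z :
          (ℝ × E3) × ℝ => K (p + z.1.1 • v) (z.1.2 + z.2 • v)) ?_)
        exact hK' _ _ (by fun_prop) (by fun_prop)
    _ = _ := lintegral_congr fun q => lintegral_const_mul' _ _ (slab_ne_top α β v q)

/-- Along a line in the direction `v` through a point `p` orthogonal to `v`, the energy is that of a
particle of mass `pZ α β p` on a line. -/
lemma pZ_line {α β : ℝ} {v p : E3} (hv : mdot α β v v = 1) (hp : mdot α β v p = 0) (s : ℝ) :
    pZ α β (p + s • v) = √((pZ α β p) ^ 2 + s ^ 2) := by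
  rw [pZ, pZ, Real.sq_sqrt (by linarith [mdot_self_nonneg α β p])]
  congr 1
  simp only [mdot_add_right, mdot_add_left, mdot_smul_right, mdot_smul_left, hv, hp,
    mdot_comm α β p v]
  ring

lemma collC_line {α β : ℝ} {ω p q : E3} (hv : mdot α β (omHat α β ω) (omHat α β ω) = 1)
    (hp : mdot α β (omHat α β ω) p = 0) (hq : mdot α β (omHat α β ω) q = 0) (s t : ℝ) :
    collC α β (p + s • omHat α β ω) (q + t • omHat α β ω) ω =
      lineC (√((pZ α β p) ^ 2 + s ^ 2)) (√((pZ α β q) ^ 2 + t ^ 2)) s t := by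
  rw [collC, collE, pZ_line hv hp, pZ_line hv hq, lineC]
  simp only [mdot_sub_right, mdot_add_right, mdot_smul_right, hv, hp, hq, mul_one, zero_add]

/-- For fixed `ω` the collision map `(p, q) ↦ (p′, q′)` preserves the measure `dp dq / (p⁰ q⁰)`. It moves
`p` and `q` along lines parallel to `ω̂`, where it is a one-dimensional elastic collision. -/
lemma lintegral_collision {α β : ℝ} (hα : 0 < α) (hβ : 0 < β) {ω : E3} (hω : ω ≠ 0)
    {F : E3 → E3 → ENNReal} (hF : Measurable (Function.uncurry F)) :
    ∫⁻ p, ∫⁻ q, F (pPr α β p q ω) (qPr α β p q ω) *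
        ENNReal.ofReal (pZ α β q)⁻¹ * ENNReal.ofReal (pZ α β p)⁻¹ =
      ∫⁻ p, ∫⁻ q, F p q * ENNReal.ofReal (pZ α β q)⁻¹ * ENNReal.ofReal (pZ α β p)⁻¹ := by
  have hv := mdot_omHat_self hα hβ hω
  have hF' : ∀ {γ : Type} [MeasurableSpace γ] (a b : γ → E3), Measurable a → Measurable b →
      Measurable fun c => F (a c) (b c) := fun a b ha hb => hF.comp (ha.prodMk hb)
  rw [lintegral_fiber₂ hv, lintegral_fiber₂ hv]
  rotate_left
  · unfold Function.uncurry
    exact ((hF' _ _ (by fun_prop) (by fun_prop)).mul (by fun_prop)).mul (by fun_prop)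
  · unfold Function.uncurry
    exact ((hF' _ _ (by fun_prop) (by fun_prop)).mul (by fun_prop)).mul (by fun_prop)
  refine lintegral_congr fun p => ?_
  congr 1
  refine lintegral_congr fun q => ?_
  congr 1
  -- Move the base points of both lines to the hyperplane orthogonal to `ω̂`.
  have hbase : ∀ K : E3 → E3 → ENNReal,
      ∫⁻ s : ℝ, ∫⁻ t : ℝ, K (p + s • omHat α β ω) (q + t • omHat α β ω) =
      ∫⁻ s : ℝ, ∫⁻ t : ℝ,
        K (p - mdot α β (omHat α β ω) p • omHat α β ω + s • omHat α β ω)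
          (q - mdot α β (omHat α β ω) q • omHat α β ω + t • omHat α β ω) := by
    intro K
    rw [← lintegral_sub_right_eq_self _ (mdot α β (omHat α β ω) p)]
    refine lintegral_congr fun s => ?_
    rw [← lintegral_sub_right_eq_self _ (mdot α β (omHat α β ω) q)]
    refine lintegral_congr fun t => ?_
    congr 1 <;> module
  rw [hbase fun p q => F (pPr α β p q ω) (qPr α β p q ω) *
        ENNReal.ofReal (pZ α β q)⁻¹ * ENNReal.ofReal (pZ α β p)⁻¹,
    hbase fun p q => F p q * ENNReal.ofReal (pZ α β q)⁻¹ * ENNReal.ofReal (pZ α β p)⁻¹]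
  have hperp : ∀ x : E3, mdot α β (omHat α β ω)
      (x - mdot α β (omHat α β ω) x • omHat α β ω) = 0 := by
    intro x
    rw [mdot_sub_right, mdot_smul_right, hv, mul_one, sub_self]
  have hp' := hperp p
  have hq' := hperp q
  generalize p - mdot α β (omHat α β ω) p • omHat α β ω = p' at *
  generalize q - mdot α β (omHat α β ω) q • omHat α β ω = q' at *
  simp only [pPr, qPr, collC_line hv hp' hq', pZ_line hv hp', pZ_line hv hq', add_assoc,
    add_sub_assoc, ← add_smul, ← sub_smul]
  exact lintegral_line (zero_lt_one.trans_le (one_le_pZ α β p'))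
    (zero_lt_one.trans_le (one_le_pZ α β q'))
    (G := fun s t => F (p' + s • omHat α β ω) (q' + t • omHat α β ω))
    (hF' _ _ (by fun_prop) (by fun_prop))

/-! ### Collision integrals with a general kernel -/

instance : IsFiniteMeasure sphMeas := by unfold sphMeas; infer_instance

lemma sphMeas_univ : sphMeas Set.univ = ENNReal.ofReal (4 * Real.pi) := by
  rw [sphMeas, Measure.toSphere_apply_univ, EuclideanSpace.volume_ball_fin_three]
  simp only [finrank_euclideanSpace, Fintype.card_fin, ENNReal.ofReal_one, one_pow, one_mul]
  rw [show ((3 : ℕ) : ENNReal) = ENNReal.ofReal 3 by norm_num, ← ENNReal.ofReal_mul (by norm_num)]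
  congr 1
  ring

/-- The unit sphere `S²`. -/
abbrev Sph : Type := Metric.sphere (0 : E3) 1

/-- The collision integral `αβ² ∫ (1/q⁰) ∫ k(p, q, ω) dω dq`. Both the gain and the loss term have
this form. -/
noncomputable def collT (α β : ℝ) (k : E3 → E3 → Sph → ℝ) (p : E3) : ℝ :=
  α * β ^ 2 * ∫ q : E3, (pZ α β q)⁻¹ * ∫ ω : Sph, k p q ω ∂sphMeas

/-- The `L¹` norm of the kernel `k` with respect to `dω dq dp / (p⁰ q⁰)`. -/
noncomputable def collN (α β : ℝ) (k : E3 → E3 → Sph → ℝ) : ENNReal :=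
  ∫⁻ p : E3, ∫⁻ q : E3, ∫⁻ ω : Sph,
    ‖k p q ω‖ₑ * ENNReal.ofReal (pZ α β q)⁻¹ * ENNReal.ofReal (pZ α β p)⁻¹ ∂sphMeas

lemma pZ_inv_pos (α β : ℝ) (p : E3) : 0 < (pZ α β p)⁻¹ :=
  inv_pos.2 (zero_lt_one.trans_le (one_le_pZ α β p))

lemma enorm_pZ_inv (α β : ℝ) (p : E3) : ‖(pZ α β p)⁻¹‖ₑ = ENNReal.ofReal (pZ α β p)⁻¹ :=
  Real.enorm_of_nonneg (pZ_inv_pos α β p).le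

lemma lintegral_collT_le {α β : ℝ} (hα : 0 < α) (k : E3 → E3 → Sph → ℝ) :
    ∫⁻ p, ‖(pZ α β p)⁻¹ * collT α β k p‖ₑ ≤ ENNReal.ofReal (α * β ^ 2) * collN α β k := by
  rw [collN, ← lintegral_const_mul' _ _ ENNReal.ofReal_ne_top]
  refine lintegral_mono fun p => ?_
  have hab : 0 ≤ α * β ^ 2 := by positivity
  rw [collT, enorm_mul, enorm_mul, enorm_pZ_inv, Real.enorm_of_nonneg hab, mul_left_comm]
  gcongr
  calc ENNReal.ofReal (pZ α β p)⁻¹ * ‖∫ q : E3, (pZ α β q)⁻¹ * ∫ ω : Sph, k p q ω ∂sphMeas‖ₑ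
      ≤ ENNReal.ofReal (pZ α β p)⁻¹ *
          ∫⁻ q : E3, ‖(pZ α β q)⁻¹ * ∫ ω : Sph, k p q ω ∂sphMeas‖ₑ := by
        gcongr
        exact enorm_integral_le_lintegral_enorm _
    _ ≤ _ := by
        rw [← lintegral_const_mul' _ _ ENNReal.ofReal_ne_top]
        refine lintegral_mono fun q => ?_
        simp only
        rw [lintegral_mul_const' _ _ ENNReal.ofReal_ne_top,
          lintegral_mul_const' _ _ ENNReal.ofReal_ne_top, enorm_mul, enorm_pZ_inv, mul_comm,
          mul_comm (ENNReal.ofReal (pZ α β q)⁻¹)]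
        gcongr
        exact enorm_integral_le_lintegral_enorm _

lemma ae_integrable_kernel {α β : ℝ} {k : E3 → E3 → Sph → ℝ}
    (hk : Measurable fun z : E3 × E3 × Sph => k z.1 z.2.1 z.2.2) (hN : collN α β k ≠ ⊤) :
    ∀ᵐ p : E3, Integrable (fun z : E3 × Sph => (pZ α β z.1)⁻¹ * k p z.1 z.2)
      ((volume : Measure E3).prod sphMeas) := by
  have hm : Measurable fun p : E3 => ∫⁻ q : E3, ∫⁻ ω : Sph,
      ‖k p q ω‖ₑ * ENNReal.ofReal (pZ α β q)⁻¹ * ENNReal.ofReal (pZ α β p)⁻¹ ∂sphMeas := by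
    refine Measurable.lintegral_prod_right' (f := fun z : E3 × E3 => ∫⁻ ω : Sph,
      ‖k z.1 z.2 ω‖ₑ * ENNReal.ofReal (pZ α β z.2)⁻¹ * ENNReal.ofReal (pZ α β z.1)⁻¹ ∂sphMeas) ?_
    refine Measurable.lintegral_prod_right' (f := fun z : (E3 × E3) × Sph =>
      ‖k z.1.1 z.1.2 z.2‖ₑ * ENNReal.ofReal (pZ α β z.1.2)⁻¹ *
        ENNReal.ofReal (pZ α β z.1.1)⁻¹) ?_
    have : Measurable fun z : (E3 × E3) × Sph => k z.1.1 z.1.2 z.2 :=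
      hk.comp (f := fun z : (E3 × E3) × Sph => (z.1.1, z.1.2, z.2)) (by fun_prop)
    fun_prop
  filter_upwards [ae_lt_top hm hN] with p hp
  have hkp : Measurable fun z : E3 × Sph => (pZ α β z.1)⁻¹ * k p z.1 z.2 := by
    have : Measurable fun z : E3 × Sph => k p z.1 z.2 :=
      hk.comp (f := fun z : E3 × Sph => (p, z.1, z.2)) (by fun_prop)
    fun_prop
  refine ⟨hkp.aestronglyMeasurable, ?_⟩
  rw [HasFiniteIntegral, lintegral_prod _ hkp.enorm.aemeasurable]
  have hpos : ENNReal.ofReal (pZ α β p)⁻¹ ≠ 0 := by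
    simpa using (zero_lt_one.trans_le (one_le_pZ α β p))
  have heq : ∫⁻ q : E3, ∫⁻ ω : Sph,
      ‖k p q ω‖ₑ * ENNReal.ofReal (pZ α β q)⁻¹ * ENNReal.ofReal (pZ α β p)⁻¹ ∂sphMeas =
      (∫⁻ q : E3, ∫⁻ ω : Sph, ‖(pZ α β q)⁻¹ * k p q ω‖ₑ ∂sphMeas) *
        ENNReal.ofReal (pZ α β p)⁻¹ := by
    rw [← lintegral_mul_const' _ _ ENNReal.ofReal_ne_top]
    refine lintegral_congr fun q => ?_
    rw [← lintegral_mul_const' _ _ ENNReal.ofReal_ne_top]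
    refine lintegral_congr fun ω => ?_
    rw [enorm_mul, enorm_pZ_inv, mul_comm ‖k p q ω‖ₑ]
  rw [heq] at hp
  exact ENNReal.lt_top_of_mul_ne_top_left hp.ne hpos

/-- A kernel of finite norm `collN` is integrable in `(q, ω)` for almost every `p`; for such `p` the
Bochner integrals in `collT` are additive. -/
lemma collT_sub_ae {α β : ℝ} {k l : E3 → E3 → Sph → ℝ}
    (hk : Measurable fun z : E3 × E3 × Sph => k z.1 z.2.1 z.2.2) (hkN : collN α β k ≠ ⊤)
    (hl : Measurable fun z : E3 × E3 × Sph => l z.1 z.2.1 z.2.2) (hlN : collN α β l ≠ ⊤) :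
    ∀ᵐ p : E3, collT α β k p - collT α β l p =
      collT α β (fun p q ω => k p q ω - l p q ω) p := by
  filter_upwards [ae_integrable_kernel hk hkN, ae_integrable_kernel hl hlN] with p h1 h2
  simp only [collT]
  rw [← mul_sub]
  congr 1
  have i1 := h1.integral_prod_left
  have i2 := h2.integral_prod_left
  simp only [integral_const_mul] at i1 i2
  rw [← integral_sub i1 i2]
  refine integral_congr_ae ?_
  filter_upwards [h1.prod_right_ae, h2.prod_right_ae] with q hq1 hq2
  have hu : IsUnit (pZ α β q)⁻¹ := (pZ_inv_pos α β q).ne'.isUnit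
  have j1 : Integrable (fun ω => k p q ω) sphMeas := (integrable_const_mul_iff hu _).1 hq1
  have j2 : Integrable (fun ω => l p q ω) sphMeas := (integrable_const_mul_iff hu _).1 hq2
  rw [← mul_sub, integral_sub j1 j2]

lemma collN_swap {α β : ℝ} {k : E3 → E3 → Sph → ℝ}
    (hk : Measurable fun z : E3 × E3 × Sph => k z.1 z.2.1 z.2.2) :
    collN α β k = ∫⁻ ω : Sph, (∫⁻ p : E3, ∫⁻ q : E3,
      ‖k p q ω‖ₑ * ENNReal.ofReal (pZ α β q)⁻¹ * ENNReal.ofReal (pZ α β p)⁻¹) ∂sphMeas := by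
  have hm : ∀ {γ : Type} [MeasurableSpace γ] (a b : γ → E3) (c : γ → Sph), Measurable a →
      Measurable b → Measurable c → Measurable fun x => k (a x) (b x) (c x) :=
    fun a b c ha hb hc => hk.comp (ha.prodMk (hb.prodMk hc))
  rw [collN]
  calc _ = ∫⁻ p : E3, ∫⁻ ω : Sph, (∫⁻ q : E3,
      ‖k p q ω‖ₑ * ENNReal.ofReal (pZ α β q)⁻¹ * ENNReal.ofReal (pZ α β p)⁻¹) ∂sphMeas := by
        refine lintegral_congr fun p => lintegral_lintegral_swap ?_
        unfold Function.uncurry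
        exact (((hm (fun _ => p) _ _ (by fun_prop) (by fun_prop) (by fun_prop)).enorm.mul
          (by fun_prop)).mul (by fun_prop)).aemeasurable
    _ = _ := by
        refine lintegral_lintegral_swap (Measurable.aemeasurable ?_)
        unfold Function.uncurry
        refine Measurable.lintegral_prod_right' (f := fun z : (E3 × Sph) × E3 =>
          ‖k z.1.1 z.2 z.1.2‖ₑ * ENNReal.ofReal (pZ α β z.2)⁻¹ *
            ENNReal.ofReal (pZ α β z.1.1)⁻¹) ?_
        exact ((hm _ _ _ (by fun_prop) (by fun_prop) (by fun_prop)).enorm.mul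
          (by fun_prop)).mul (by fun_prop)

/-- Bounds that hold for each `ω` are integrated over the sphere, whose area is `4π`; the weights
`1/p⁰` and `1/q⁰` are at most one. -/
lemma collN_le {α β C₁ : ℝ} {k : E3 → E3 → Sph → ℝ} {F : E3 → E3 → ℝ}
    (hC₁ : 0 < C₁)
    (hk : Measurable fun z : E3 × E3 × Sph => k z.1 z.2.1 z.2.2)
    (h : ∀ ω : Sph, ∫⁻ p : E3, ∫⁻ q : E3,
      ‖k p q ω‖ₑ * ENNReal.ofReal (pZ α β q)⁻¹ * ENNReal.ofReal (pZ α β p)⁻¹ ≤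
      ENNReal.ofReal C₁ * ∫⁻ p, ∫⁻ q,
        ‖F p q‖ₑ * ENNReal.ofReal (pZ α β q)⁻¹ * ENNReal.ofReal (pZ α β p)⁻¹) :
    collN α β k ≤ ENNReal.ofReal (4 * Real.pi * C₁) * ∫⁻ p, ∫⁻ q, ‖F p q‖ₑ := by
  have hle : ∀ p, ENNReal.ofReal (pZ α β p)⁻¹ ≤ 1 := fun p =>
    ENNReal.ofReal_le_one.2 (inv_le_one_of_one_le₀ (one_le_pZ α β p))
  rw [collN_swap hk]
  calc _ ≤ ∫⁻ _ : Sph, (ENNReal.ofReal C₁ * ∫⁻ p, ∫⁻ q, ‖F p q‖ₑ) ∂sphMeas := by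
        refine lintegral_mono fun ω => (h ω).trans ?_
        gcongr with p q
        calc _ ≤ ‖F p q‖ₑ * 1 * 1 := by gcongr <;> exact hle _
          _ = _ := by simp
    _ = _ := by
        rw [lintegral_const, sphMeas_univ, mul_right_comm, ← ENNReal.ofReal_mul hC₁.le,
          mul_comm C₁]

/-! ### The gain and loss terms -/

/-- Kernel of the gain term for a two-particle density `F`; the term `Q⁺(f, g)` is obtained from
`F p q = f p * g q`. -/
noncomputable def gainK (α β : ℝ) (S₀ : E3 → E3 → E3 → E3 → ℝ) (F : E3 → E3 → ℝ) (p q : E3) (ω : Sph) : ℝ :=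
  F (pPr α β p q ω) (qPr α β p q ω) * S₀ p q (pPr α β p q ω) (qPr α β p q ω)

/-- Kernel of the loss term for a two-particle density `F`; the term `Q⁻(f, g)` is obtained from
`F p q = f p * g q`. -/
noncomputable def lossK (α β : ℝ) (S₀ : E3 → E3 → E3 → E3 → ℝ) (F : E3 → E3 → ℝ) (p q : E3) (ω : Sph) : ℝ :=
  F p q * S₀ p q (pPr α β p q ω) (qPr α β p q ω)

section kernels

variable {α β C₁ : ℝ} {S₀ : E3 → E3 → E3 → E3 → ℝ}

lemma measurable_S₀
    (hS : Measurable fun x : (E3 × E3) × E3 × E3 => S₀ x.1.1 x.1.2 x.2.1 x.2.2) :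
    Measurable fun z : E3 × E3 × Sph => S₀ z.1 z.2.1
      (pPr α β z.1 z.2.1 z.2.2) (qPr α β z.1 z.2.1 z.2.2) :=
  hS.comp (f := fun z : E3 × E3 × Sph => ((z.1, z.2.1),
    pPr α β z.1 z.2.1 z.2.2, qPr α β z.1 z.2.1 z.2.2)) (by fun_prop)

lemma measurable_gainK
    (hS : Measurable fun x : (E3 × E3) × E3 × E3 => S₀ x.1.1 x.1.2 x.2.1 x.2.2)
    {F : E3 → E3 → ℝ} (hF : Measurable (Function.uncurry F)) :
    Measurable fun z : E3 × E3 × Sph => gainK α β S₀ F z.1 z.2.1 z.2.2 :=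
  (hF.comp (g := Function.uncurry F) (f := fun z : E3 × E3 × Sph =>
    (pPr α β z.1 z.2.1 z.2.2, qPr α β z.1 z.2.1 z.2.2)) (by fun_prop)).mul (measurable_S₀ hS)

lemma measurable_lossK
    (hS : Measurable fun x : (E3 × E3) × E3 × E3 => S₀ x.1.1 x.1.2 x.2.1 x.2.2)
    {F : E3 → E3 → ℝ} (hF : Measurable (Function.uncurry F)) :
    Measurable fun z : E3 × E3 × Sph => lossK α β S₀ F z.1 z.2.1 z.2.2 :=
  (hF.comp (g := Function.uncurry F) (f := fun z : E3 × E3 × Sph =>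
    (z.1, z.2.1)) (by fun_prop)).mul (measurable_S₀ hS)

lemma enorm_S₀_le (hS0 : ∀ p q p' q', 0 ≤ S₀ p q p' q') (hS1 : ∀ p q p' q', S₀ p q p' q' ≤ C₁)
    (p q p' q' : E3) : ‖S₀ p q p' q'‖ₑ ≤ ENNReal.ofReal C₁ := by
  rw [Real.enorm_of_nonneg (hS0 _ _ _ _)]
  exact ENNReal.ofReal_le_ofReal (hS1 _ _ _ _)

lemma collN_gainK_le (hα : 0 < α) (hβ : 0 < β) (hC₁ : 0 < C₁)
    (hS : Measurable fun x : (E3 × E3) × E3 × E3 => S₀ x.1.1 x.1.2 x.2.1 x.2.2)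
    (hS0 : ∀ p q p' q', 0 ≤ S₀ p q p' q') (hS1 : ∀ p q p' q', S₀ p q p' q' ≤ C₁)
    {F : E3 → E3 → ℝ} (hF : Measurable (Function.uncurry F)) :
    collN α β (gainK α β S₀ F) ≤ ENNReal.ofReal (4 * Real.pi * C₁) * ∫⁻ p, ∫⁻ q, ‖F p q‖ₑ := by
  refine collN_le hC₁ (measurable_gainK hS hF) fun ω => ?_
  rw [← lintegral_collision hα hβ (ne_zero_of_mem_unit_sphere ω) (F := fun p q => ‖F p q‖ₑ)
    hF.enorm, ← lintegral_const_mul' _ _ ENNReal.ofReal_ne_top]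
  refine lintegral_mono fun p => ?_
  rw [← lintegral_const_mul' _ _ ENNReal.ofReal_ne_top]
  refine lintegral_mono fun q => ?_
  simp only [gainK, enorm_mul]
  rw [← mul_assoc, ← mul_assoc, mul_comm (ENNReal.ofReal C₁)]
  gcongr
  exact enorm_S₀_le hS0 hS1 _ _ _ _

lemma collN_lossK_le (hC₁ : 0 < C₁)
    (hS : Measurable fun x : (E3 × E3) × E3 × E3 => S₀ x.1.1 x.1.2 x.2.1 x.2.2)
    (hS0 : ∀ p q p' q', 0 ≤ S₀ p q p' q') (hS1 : ∀ p q p' q', S₀ p q p' q' ≤ C₁)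
    {F : E3 → E3 → ℝ} (hF : Measurable (Function.uncurry F)) :
    collN α β (lossK α β S₀ F) ≤ ENNReal.ofReal (4 * Real.pi * C₁) * ∫⁻ p, ∫⁻ q, ‖F p q‖ₑ := by
  refine collN_le hC₁ (measurable_lossK hS hF) fun ω => ?_
  rw [← lintegral_const_mul' _ _ ENNReal.ofReal_ne_top]
  refine lintegral_mono fun p => ?_
  rw [← lintegral_const_mul' _ _ ENNReal.ofReal_ne_top]
  refine lintegral_mono fun q => ?_
  simp only [lossK, enorm_mul]
  rw [← mul_assoc, ← mul_assoc, mul_comm (ENNReal.ofReal C₁)]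
  gcongr
  exact enorm_S₀_le hS0 hS1 _ _ _ _

lemma lintegral_tensor (f g : E3 → ℝ) (hg : ∫⁻ p, ‖g p‖ₑ ≠ ⊤) :
    ∫⁻ p, ∫⁻ q, ‖f p * g q‖ₑ = (∫⁻ p, ‖f p‖ₑ) * ∫⁻ p, ‖g p‖ₑ := by
  rw [← lintegral_mul_const' _ _ hg]
  refine lintegral_congr fun p => ?_
  simp only [enorm_mul]
  rw [lintegral_const_mul' _ _ enorm_ne_top]

lemma lintegral_tensor_sub_le {f g : E3 → ℝ} (hf : Measurable f) (hg : Measurable g)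
    (hfi : ∫⁻ p, ‖f p‖ₑ ≠ ⊤) (hgi : ∫⁻ p, ‖g p‖ₑ ≠ ⊤) :
    ∫⁻ p, ∫⁻ q, ‖f p * f q - g p * g q‖ₑ ≤
      ((∫⁻ p, ‖f p‖ₑ) + ∫⁻ p, ‖g p‖ₑ) * ∫⁻ p, ‖f p - g p‖ₑ := by
  have hd : ∫⁻ p, ‖f p - g p‖ₑ ≠ ⊤ := by
    refine ne_top_of_le_ne_top (ENNReal.add_ne_top.2 ⟨hfi, hgi⟩) ?_
    rw [← lintegral_add_left hf.enorm]
    exact lintegral_mono fun p => enorm_sub_le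
  calc _ ≤ ∫⁻ p, ∫⁻ q, (‖f p * (f q - g q)‖ₑ + ‖(f p - g p) * g q‖ₑ) := by
        refine lintegral_mono fun p => lintegral_mono fun q => ?_
        refine le_of_eq_of_le ?_ (enorm_add_le _ _)
        congr 1
        ring
    _ = ∫⁻ p, ((∫⁻ q, ‖f p * (f q - g q)‖ₑ) + ∫⁻ q, ‖(f p - g p) * g q‖ₑ) := by
        refine lintegral_congr fun p => lintegral_add_left (by fun_prop) _
    _ = (∫⁻ p, ∫⁻ q, ‖f p * (f q - g q)‖ₑ) + ∫⁻ p, ∫⁻ q, ‖(f p - g p) * g q‖ₑ := by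
        refine lintegral_add_left ?_ _
        exact Measurable.lintegral_prod_right' (f := fun z : E3 × E3 =>
          ‖f z.1 * (f z.2 - g z.2)‖ₑ) (by fun_prop)
    _ = _ := by
        rw [lintegral_tensor f (fun q => f q - g q) hd,
          lintegral_tensor (fun p => f p - g p) g hgi]
        ring

/-- The bound `‖(1/p⁰) Q⁺(f, f)‖ ≤ C ‖f‖²`. -/
lemma lintegral_Qplus_le (hα : 0 < α) (hβ : 0 < β) (hC₁ : 0 < C₁)
    (hS : Measurable fun x : (E3 × E3) × E3 × E3 => S₀ x.1.1 x.1.2 x.2.1 x.2.2)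
    (hS0 : ∀ p q p' q', 0 ≤ S₀ p q p' q') (hS1 : ∀ p q p' q', S₀ p q p' q' ≤ C₁)
    {f : E3 → ℝ} (hf : Measurable f) (hfi : ∫⁻ p, ‖f p‖ₑ ≠ ⊤) :
    ∫⁻ p, ‖(pZ α β p)⁻¹ * Qplus α β S₀ f f p‖ₑ ≤
      ENNReal.ofReal (4 * Real.pi * C₁ * α * β ^ 2) * ((∫⁻ p, ‖f p‖ₑ) * ∫⁻ p, ‖f p‖ₑ) := by
  have hF : Measurable (Function.uncurry fun p q => f p * f q) := by
    unfold Function.uncurry; fun_prop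
  refine (lintegral_collT_le hα (gainK α β S₀ fun p q => f p * f q)).trans ?_
  calc _ ≤ ENNReal.ofReal (α * β ^ 2) *
        (ENNReal.ofReal (4 * Real.pi * C₁) * ∫⁻ p, ∫⁻ q, ‖f p * f q‖ₑ) := by
        gcongr
        exact collN_gainK_le hα hβ hC₁ hS hS0 hS1 hF
    _ = _ := by
        rw [lintegral_tensor f f hfi, ← mul_assoc, ← ENNReal.ofReal_mul (by positivity)]
        congr 2
        ring

/-- The Lipschitz bound `‖(1/p⁰) (Q(f, f) - Q(g, g))‖ ≤ 2C (‖f‖ + ‖g‖) ‖f - g‖`, one factor `C` coming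
from the gain term and one from the loss term. -/
lemma lintegral_Qcoll_sub_le (hα : 0 < α) (hβ : 0 < β) (hC₁ : 0 < C₁)
    (hS : Measurable fun x : (E3 × E3) × E3 × E3 => S₀ x.1.1 x.1.2 x.2.1 x.2.2)
    (hS0 : ∀ p q p' q', 0 ≤ S₀ p q p' q') (hS1 : ∀ p q p' q', S₀ p q p' q' ≤ C₁)
    {f g : E3 → ℝ} (hf : Measurable f) (hg : Measurable g)
    (hfi : ∫⁻ p, ‖f p‖ₑ ≠ ⊤) (hgi : ∫⁻ p, ‖g p‖ₑ ≠ ⊤) :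
    ∫⁻ p, ‖(pZ α β p)⁻¹ * Qcoll α β S₀ f f p - (pZ α β p)⁻¹ * Qcoll α β S₀ g g p‖ₑ ≤
      2 * (ENNReal.ofReal (4 * Real.pi * C₁ * α * β ^ 2) *
        (((∫⁻ p, ‖f p‖ₑ) + ∫⁻ p, ‖g p‖ₑ) * ∫⁻ p, ‖f p - g p‖ₑ)) := by
  have hFm : ∀ {f : E3 → ℝ}, Measurable f → Measurable (Function.uncurry fun p q => f p * f q) := by
    intro f hf; unfold Function.uncurry; fun_prop
  have hDm : Measurable (Function.uncurry fun p q => f p * f q - g p * g q) := by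
    unfold Function.uncurry; fun_prop
  have hfin : ∀ {f : E3 → ℝ}, ∫⁻ p, ‖f p‖ₑ ≠ ⊤ →
      ENNReal.ofReal (4 * Real.pi * C₁) * ∫⁻ p, ∫⁻ q, ‖f p * f q‖ₑ ≠ ⊤ := by
    intro f hfi
    rw [lintegral_tensor f f hfi]
    exact ENNReal.mul_ne_top ENNReal.ofReal_ne_top (ENNReal.mul_ne_top hfi hfi)
  have hG : ∀ {f : E3 → ℝ}, Measurable f → ∫⁻ p, ‖f p‖ₑ ≠ ⊤ →
      collN α β (gainK α β S₀ fun p q => f p * f q) ≠ ⊤ := fun hf hfi =>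
    ne_top_of_le_ne_top (hfin hfi) (collN_gainK_le hα hβ hC₁ hS hS0 hS1 (hFm hf))
  have hL : ∀ {f : E3 → ℝ}, Measurable f → ∫⁻ p, ‖f p‖ₑ ≠ ⊤ →
      collN α β (lossK α β S₀ fun p q => f p * f q) ≠ ⊤ := fun hf hfi =>
    ne_top_of_le_ne_top (hfin hfi) (collN_lossK_le hC₁ hS hS0 hS1 (hFm hf))
  have hgain := collT_sub_ae (measurable_gainK hS (hFm hf)) (hG hf hfi)
    (measurable_gainK hS (hFm hg)) (hG hg hgi)
  have hloss := collT_sub_ae (measurable_lossK hS (hFm hf)) (hL hf hfi)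
    (measurable_lossK hS (hFm hg)) (hL hg hgi)
  have hkg : (fun p q ω => gainK α β S₀ (fun p q => f p * f q) p q ω -
      gainK α β S₀ (fun p q => g p * g q) p q ω) =
      gainK α β S₀ fun p q => f p * f q - g p * g q := by
    funext p q ω; simp only [gainK]; ring
  have hkl : (fun p q ω => lossK α β S₀ (fun p q => f p * f q) p q ω -
      lossK α β S₀ (fun p q => g p * g q) p q ω) =
      lossK α β S₀ fun p q => f p * f q - g p * g q := by
    funext p q ω; simp only [lossK]; ring
  rw [hkg] at hgain
  rw [hkl] at hloss
  set KG := gainK α β S₀ fun p q => f p * f q - g p * g q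
  set KL := lossK α β S₀ fun p q => f p * f q - g p * g q
  have hfinal : ∀ N : ENNReal, N ≤ ENNReal.ofReal (4 * Real.pi * C₁) *
      (∫⁻ p, ∫⁻ q, ‖f p * f q - g p * g q‖ₑ) → ENNReal.ofReal (α * β ^ 2) * N ≤
      ENNReal.ofReal (4 * Real.pi * C₁ * α * β ^ 2) *
        (((∫⁻ p, ‖f p‖ₑ) + ∫⁻ p, ‖g p‖ₑ) * ∫⁻ p, ‖f p - g p‖ₑ) := by
    intro N hN
    calc _ ≤ ENNReal.ofReal (α * β ^ 2) * (ENNReal.ofReal (4 * Real.pi * C₁) *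
          (((∫⁻ p, ‖f p‖ₑ) + ∫⁻ p, ‖g p‖ₑ) * ∫⁻ p, ‖f p - g p‖ₑ)) := by
          gcongr
          refine hN.trans ?_
          gcongr
          exact lintegral_tensor_sub_le hf hg hfi hgi
      _ = _ := by
          rw [← mul_assoc, ← ENNReal.ofReal_mul (by positivity)]
          congr 2
          ring
  have hTm : ∀ {k : E3 → E3 → Sph → ℝ},
      (Measurable fun z : E3 × E3 × Sph => k z.1 z.2.1 z.2.2) → Measurable (collT α β k) := by
    intro k hk
    have h1 : StronglyMeasurable fun z : E3 × E3 => ∫ ω : Sph, k z.1 z.2 ω ∂sphMeas :=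
      StronglyMeasurable.integral_prod_right' (f := fun z : (E3 × E3) × Sph => k z.1.1 z.1.2 z.2)
        (hk.comp (f := fun z : (E3 × E3) × Sph => (z.1.1, z.1.2, z.2))
          (by fun_prop)).stronglyMeasurable
    have h1' := h1.measurable
    have h2 : StronglyMeasurable fun p : E3 =>
        ∫ q : E3, (pZ α β q)⁻¹ * ∫ ω : Sph, k p q ω ∂sphMeas :=
      StronglyMeasurable.integral_prod_right' (f := fun z : E3 × E3 =>
        (pZ α β z.2)⁻¹ * ∫ ω : Sph, k z.1 z.2 ω ∂sphMeas)
        (Measurable.stronglyMeasurable (by fun_prop))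
    exact h2.measurable.const_mul _
  have hKGm := hTm (measurable_gainK (α := α) (β := β) hS hDm)
  calc _ ≤ ∫⁻ p, (‖(pZ α β p)⁻¹ * collT α β KG p‖ₑ + ‖(pZ α β p)⁻¹ * collT α β KL p‖ₑ) := by
        refine lintegral_mono_ae ?_
        filter_upwards [hgain, hloss] with p h1 h2
        refine le_of_eq_of_le ?_ enorm_sub_le
        rw [← h1, ← h2]
        congr 1
        change (pZ α β p)⁻¹ * (collT α β (gainK α β S₀ fun p q => f p * f q) p -
          collT α β (lossK α β S₀ fun p q => f p * f q) p) -
          (pZ α β p)⁻¹ * (collT α β (gainK α β S₀ fun p q => g p * g q) p -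
          collT α β (lossK α β S₀ fun p q => g p * g q) p) = _
        ring
    _ = (∫⁻ p, ‖(pZ α β p)⁻¹ * collT α β KG p‖ₑ) + ∫⁻ p, ‖(pZ α β p)⁻¹ * collT α β KL p‖ₑ := by
        refine lintegral_add_left ?_ _
        fun_prop
    _ ≤ _ := by
        rw [two_mul]
        exact add_le_add
          ((lintegral_collT_le hα KG).trans
            (hfinal _ (collN_gainK_le hα hβ hC₁ hS hS0 hS1 hDm)))
          ((lintegral_collT_le hα KL).trans (hfinal _ (collN_lossK_le hC₁ hS hS0 hS1 hDm)))

lemma Qminus_nonneg_ae (hα : 0 < α) (hS0 : ∀ p q p' q', 0 ≤ S₀ p q p' q') {f : E3 → ℝ}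
    (hf : 0 ≤ᵐ[volume] f) : ∀ᵐ p : E3, 0 ≤ Qminus α β S₀ f f p := by
  filter_upwards [hf] with p hp
  refine mul_nonneg (by positivity) (integral_nonneg_of_ae ?_)
  filter_upwards [hf] with q hq
  exact mul_nonneg (pZ_inv_pos α β q).le
    (integral_nonneg fun ω => mul_nonneg (mul_nonneg hp hq) (hS0 _ _ _ _))

end kernels

/-! ### Estimates for the solutions `w` -/

lemma lintegral_enorm_L1 (f : L1) : ∫⁻ p, ‖f p‖ₑ = ENNReal.ofReal ‖f‖ := by
  rw [L1.norm_def, ENNReal.ofReal_toReal]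
  exact (L1.integrable_coeFn f).2.ne

/-- For nonnegative `w` the loss term has a favourable sign, so that pointwise
`0 ≤ c w ≤ u + (1/p⁰) Q⁺(w, w)`. -/
lemma norm_solution_le {α β C₁ : ℝ} {S₀ : E3 → E3 → E3 → E3 → ℝ}
    (hα : 0 < α) (hβ : 0 < β) (hC₁ : 0 < C₁)
    (hS : Measurable fun x : (E3 × E3) × E3 × E3 => S₀ x.1.1 x.1.2 x.2.1 x.2.2)
    (hS0 : ∀ p q p' q', 0 ≤ S₀ p q p' q') (hS1 : ∀ p q p' q', S₀ p q p' q' ≤ C₁)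
    {c : ℝ} (hc : 0 ≤ c) {u w : L1} (hw : 0 ≤ᵐ[volume] ⇑w)
    (heq : (fun p : E3 => c * w p - (pZ α β p)⁻¹ * Qcoll α β S₀ (⇑w) (⇑w) p) =ᵐ[volume] ⇑u) :
    c * ‖w‖ ≤ ‖u‖ + 4 * Real.pi * C₁ * α * β ^ 2 * (‖w‖ * ‖w‖) := by
  have hwm : Measurable w := (Lp.stronglyMeasurable w).measurable
  have hum : Measurable u := (Lp.stronglyMeasurable u).measurable
  have hwi : ∫⁻ p, ‖w p‖ₑ ≠ ⊤ := by rw [lintegral_enorm_L1]; exact ENNReal.ofReal_ne_top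
  have hQ := lintegral_Qplus_le hα hβ hC₁ hS hS0 hS1 hwm hwi
  rw [← ENNReal.ofReal_le_ofReal_iff (by positivity), ENNReal.ofReal_mul hc,
    ENNReal.ofReal_add (by positivity) (by positivity), ENNReal.ofReal_mul (by positivity),
    ENNReal.ofReal_mul (norm_nonneg w), ← lintegral_enorm_L1, ← lintegral_enorm_L1,
    ← lintegral_const_mul' _ _ ENNReal.ofReal_ne_top]
  refine le_trans ?_ (add_le_add_right hQ _)
  rw [← lintegral_add_left hum.enorm]
  refine lintegral_mono_ae ?_
  filter_upwards [heq, hw, Qminus_nonneg_ae (β := β) hα hS0 hw] with p hp hwp hm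
  have hwp' : 0 ≤ w p := hwp
  rw [← Real.enorm_of_nonneg hc, ← enorm_mul, Real.enorm_of_nonneg (mul_nonneg hc hwp'),
    ← ofReal_norm, ← ofReal_norm, ← ENNReal.ofReal_add (norm_nonneg _) (norm_nonneg _)]
  refine ENNReal.ofReal_le_ofReal ?_
  have h1 := Real.le_norm_self (u p)
  have h2 := Real.le_norm_self ((pZ α β p)⁻¹ * Qplus α β S₀ w w p)
  have h3 := mul_nonneg (pZ_inv_pos α β p).le hm
  rw [Qcoll, mul_sub] at hp
  linarith

lemma norm_solution_sub_le {α β C₁ : ℝ} {S₀ : E3 → E3 → E3 → E3 → ℝ}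
    (hα : 0 < α) (hβ : 0 < β) (hC₁ : 0 < C₁)
    (hS : Measurable fun x : (E3 × E3) × E3 × E3 => S₀ x.1.1 x.1.2 x.2.1 x.2.2)
    (hS0 : ∀ p q p' q', 0 ≤ S₀ p q p' q') (hS1 : ∀ p q p' q', S₀ p q p' q' ≤ C₁)
    {c : ℝ} {u v wu wv : L1}
    (hequ : (fun p : E3 => c * wu p - (pZ α β p)⁻¹ * Qcoll α β S₀ (⇑wu) (⇑wu) p)
      =ᵐ[volume] ⇑u)
    (heqv : (fun p : E3 => c * wv p - (pZ α β p)⁻¹ * Qcoll α β S₀ (⇑wv) (⇑wv) p)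
      =ᵐ[volume] ⇑v) :
    ‖c • (wu - wv) - (u - v)‖ ≤
      2 * (4 * Real.pi * C₁ * α * β ^ 2 * ((‖wu‖ + ‖wv‖) * ‖wu - wv‖)) := by
  have hm : ∀ w : L1, Measurable w := fun w => (Lp.stronglyMeasurable w).measurable
  have hi : ∀ w : L1, ∫⁻ p, ‖w p‖ₑ ≠ ⊤ := fun w => by
    rw [lintegral_enorm_L1]; exact ENNReal.ofReal_ne_top
  have hQ := lintegral_Qcoll_sub_le hα hβ hC₁ hS hS0 hS1 (hm wu) (hm wv) (hi wu) (hi wv)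
  have hd : ∫⁻ p, ‖wu p - wv p‖ₑ = ENNReal.ofReal ‖wu - wv‖ := by
    rw [← lintegral_enorm_L1]
    refine lintegral_congr_ae ?_
    filter_upwards [Lp.coeFn_sub wu wv] with p hp
    rw [hp, Pi.sub_apply]
  have hl : ∫⁻ p, ‖(pZ α β p)⁻¹ * Qcoll α β S₀ wu wu p - (pZ α β p)⁻¹ * Qcoll α β S₀ wv wv p‖ₑ =
      ENNReal.ofReal ‖c • (wu - wv) - (u - v)‖ := by
    rw [← lintegral_enorm_L1]
    refine lintegral_congr_ae ?_
    filter_upwards [Lp.coeFn_sub wu wv, Lp.coeFn_sub u v, Lp.coeFn_smul c (wu - wv),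
      Lp.coeFn_sub (c • (wu - wv)) (u - v), hequ, heqv] with p h1 h2 h3 h4 h5 h6
    rw [h4, Pi.sub_apply, h3, h2, Pi.smul_apply, h1, Pi.sub_apply, Pi.sub_apply, ← h5, ← h6,
      smul_eq_mul]
    congr 1
    ring
  have h2 : ∀ X : ℝ, 2 * ENNReal.ofReal X = ENNReal.ofReal (2 * X) := fun X => by
    rw [ENNReal.ofReal_mul zero_le_two, ENNReal.ofReal_ofNat]
  rw [hd, hl, lintegral_enorm_L1, lintegral_enorm_L1,
    ← ENNReal.ofReal_add (norm_nonneg _) (norm_nonneg _), ← ENNReal.ofReal_mul (by positivity),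
    ← ENNReal.ofReal_mul (by positivity), h2] at hQ
  exact (ENNReal.ofReal_le_ofReal_iff (by positivity)).1 hQ

/-- With `m = √n` and `x = ‖w‖`: the a priori bound `x ≤ r` gives `m x ≤ r (1 + C r)`, hence `C x ≤ 1/6`,
and then the quadratic term can be absorbed into the left-hand side. -/
lemma norm_le_of_quadratic {C r m x : ℝ} (hC : 0 < C) (hr : 0 < r) (hm : 2 ≤ m)
    (hn : 3 * C * r * (1 + C * r) / m ≤ 1 / 2) (hx0 : 0 ≤ x) (hxr : x ≤ r)
    (hx : m * x ≤ r + C * (x * x)) : C * x ≤ 1 / 6 ∧ m * x ≤ 12 / 11 * r := by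
  have hm0 : 0 < m := by linarith
  rw [div_le_iff₀ hm0] at hn
  have h1 : m * x ≤ r * (1 + C * r) := by nlinarith [mul_le_mul hxr hxr hx0 hr.le]
  have h2 : C * x ≤ 1 / 6 := by
    have := mul_le_mul_of_nonneg_left h1 hC.le
    by_contra! h
    nlinarith
  refine ⟨h2, ?_⟩
  nlinarith

/-! ### The Lipschitz estimate -/

theorem statement_11
    (C₀ C₁ α β : ℝ) (hC₀ : 0 < C₀) (hC₁ : 0 < C₁) (hα : C₀ ≤ α) (hβ : C₀ ≤ β)
    (S₀ : E3 → E3 → E3 → E3 → ℝ)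
    (hS₀meas : Measurable fun x : (E3 × E3) × E3 × E3 => S₀ x.1.1 x.1.2 x.2.1 x.2.2)
    (hS₀nonneg : ∀ p q p' q', 0 ≤ S₀ p q p' q')
    (hS₀bdd : ∀ p q p' q', S₀ p q p' q' ≤ C₁)
    (hS₀symm : ∀ p q p' q', S₀ p q p' q' = S₀ p' q' p q)
    (r : ℝ) (hr : 0 < r) (n : ℕ)
    (hn4 : 4 ≤ n) (hn1 : (1 + 4 * Real.pi * C₁ * α * β ^ 2 * r) / Real.sqrt n ≤ 1)
    (hn2 : 3 * (4 * Real.pi * C₁ * α * β ^ 2) * r * (1 + 4 * Real.pi * C₁ * α * β ^ 2 * r) / Real.sqrt n ≤ 1 / 2)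
    (u v wu wv : L1) (hu : memX r u) (hv : memX r v) (hwu : memX r wu) (hwv : memX r wv)
    (hequ : (fun p : E3 => Real.sqrt n * wu p - (pZ α β p)⁻¹ * Qcoll α β S₀ (⇑wu) (⇑wu) p)
      =ᵐ[volume] ⇑u)
    (heqv : (fun p : E3 => Real.sqrt n * wv p - (pZ α β p)⁻¹ * Qcoll α β S₀ (⇑wv) (⇑wv) p)
      =ᵐ[volume] ⇑v) :
    ‖(((n : ℝ) * Real.sqrt n) • wu - (n : ℝ) • u) -
        (((n : ℝ) * Real.sqrt n) • wv - (n : ℝ) • v)‖ ≤ 8 * (4 * Real.pi * C₁ * α * β ^ 2) * r * ‖u - v‖ := by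
  have hα0 : 0 < α := hC₀.trans_le hα
  have hβ0 : 0 < β := hC₀.trans_le hβ
  have hC : 0 < 4 * Real.pi * C₁ * α * β ^ 2 := by positivity
  have hm : 2 ≤ √(n : ℝ) := by
    refine Real.le_sqrt_of_sq_le ?_
    have : (4 : ℝ) ≤ n := by exact_mod_cast hn4
    linarith
  have hsq : √(n : ℝ) * √(n : ℝ) = n := Real.mul_self_sqrt (Nat.cast_nonneg n)
  have hU := norm_solution_le hα0 hβ0 hC₁ hS₀meas hS₀nonneg hS₀bdd (by linarith) hwu.1 hequ
  have hV := norm_solution_le hα0 hβ0 hC₁ hS₀meas hS₀nonneg hS₀bdd (by linarith) hwv.1 heqv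
  have hD := norm_solution_sub_le hα0 hβ0 hC₁ hS₀meas hS₀nonneg hS₀bdd hequ heqv
  have hnorm : ‖(((n : ℝ) * √n) • wu - (n : ℝ) • u) - (((n : ℝ) * √n) • wv - (n : ℝ) • v)‖ =
      n * ‖√(n : ℝ) • (wu - wv) - (u - v)‖ := by
    rw [← Real.norm_of_nonneg (Nat.cast_nonneg (α := ℝ) n), ← norm_smul,
      Real.norm_of_nonneg (Nat.cast_nonneg (α := ℝ) n)]
    congr 1
    module
  have htri : √(n : ℝ) * ‖wu - wv‖ ≤ ‖u - v‖ + ‖√(n : ℝ) • (wu - wv) - (u - v)‖ := by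
    rw [← Real.norm_of_nonneg (Real.sqrt_nonneg (n : ℝ)), ← norm_smul,
      Real.norm_of_nonneg (Real.sqrt_nonneg (n : ℝ))]
    exact norm_le_norm_add_norm_sub' _ _
  rw [hnorm]
  generalize 4 * Real.pi * C₁ * α * β ^ 2 = C at *
  obtain ⟨hU1, hU2⟩ := norm_le_of_quadratic hC hr hm hn2 (norm_nonneg wu) hwu.2
    (hU.trans (by linarith [hu.2]))
  obtain ⟨hV1, hV2⟩ := norm_le_of_quadratic hC hr hm hn2 (norm_nonneg wv) hwv.2
    (hV.trans (by linarith [hv.2]))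
  generalize √(n : ℝ) = m at *
  generalize ‖m • (wu - wv) - (u - v)‖ = d at *
  rw [← hsq]
  have hy0 := norm_nonneg (wu - wv)
  have hD0 := norm_nonneg (u - v)
  generalize ‖wu - wv‖ = y at *
  generalize ‖u - v‖ = D at *
  generalize ‖wu‖ = x at *
  generalize ‖wv‖ = z at *
  -- The Lipschitz factor `2C(‖w_u‖ + ‖w_v‖)` is at most `2/3 ≤ (1/3)√n`, so it can be absorbed.
  have hy : m * y ≤ 3 / 2 * D := by
    have : C * (x + z) * y ≤ 1 / 3 * y := by gcongr; linarith
    nlinarith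
  calc m * m * d ≤ m * m * (2 * (C * ((x + z) * y))) := by gcongr
    _ = 2 * C * ((m * x + m * z) * (m * y)) := by ring
    _ ≤ 2 * C * ((12 / 11 * r + 12 / 11 * r) * (3 / 2 * D)) := by gcongr
    _ = 72 / 11 * (C * r * D) := by ring
    _ ≤ 8 * (C * r * D) := by gcongr; norm_num
    _ = 8 * C * r * D := by ring
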